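/- There exist a real number α > 0 and a natural number k₀ such that for every integer k ≥ k₀ and every a ∈ ℝ², N_k(Σ₁, a) ≤ α·k⁴, where Σ₁ = {A₁, A₂}. -/

import Mathlib

open Matrix Set

noncomputable section

/-- `XSeq S a k` is the set of all vectors `T_{k-1} ⋯ T_0 · a` with each `T_j ∈ S`
(and `XSeq S a 0 = {a}`). -/
def XSeq {n : ℕ} (S : Set (Matrix (Fin n) (Fin n) ℝ)) (a : Fin n → ℝ) : ℕ → Set (Fin n → ℝ)
  | 0 => {a}
  | k + 1 => ⋃ A ∈ S, A.mulVec '' XSeq S a k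

/-- `PHull S a k` is the convex hull of `XSeq S a k`. -/
def PHull {n : ℕ} (S : Set (Matrix (Fin n) (Fin n) ℝ)) (a : Fin n → ℝ) (k : ℕ) :
    Set (Fin n → ℝ) :=
  convexHull ℝ (XSeq S a k)

/-- `EPts S a k` is the set of extreme points of `PHull S a k`. -/
def EPts {n : ℕ} (S : Set (Matrix (Fin n) (Fin n) ℝ)) (a : Fin n → ℝ) (k : ℕ) :
    Set (Fin n → ℝ) :=
  Set.extremePoints ℝ (PHull S a k)

/-- `NExt S a k` is the number of extreme points of `PHull S a k`. -/
def NExt {n : ℕ} (S : Set (Matrix (Fin n) (Fin n) ℝ)) (a : Fin n → ℝ) (k : ℕ) : ℕ :=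
  (EPts S a k).ncard

def M1 : Matrix (Fin 2) (Fin 2) ℝ := !![0, 1; 1, 0]
def M2 : Matrix (Fin 2) (Fin 2) ℝ := !![1, 1; 0, 1]
def M3 : Matrix (Fin 2) (Fin 2) ℝ := !![1, 0; 1, 1]
def M4 : Matrix (Fin 2) (Fin 2) ℝ := !![1, 1; 1, 0]
def M5 : Matrix (Fin 2) (Fin 2) ℝ := !![0, 1; 1, 1]

def uu (v : ℝ × ℝ) : ℝ × ℝ := (v.1 + v.2, v.2)
def ss (v : ℝ × ℝ) : ℝ × ℝ := (v.2, v.1)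

/-- Action of a word (leftmost letter acts last). -/
def run : List Bool → ℝ × ℝ → ℝ × ℝ
  | [], a => a
  | true :: w, a => uu (run w a)
  | false :: w, a => ss (run w a)

lemma run_append (w w' : List Bool) (a : ℝ × ℝ) : run (w ++ w') a = run w (run w' a) := by
  induction w with
  | nil => rfl
  | cons x w ih => cases x <;> simp [run, ih]

lemma uu_inj {v w : ℝ × ℝ} (h : uu v = uu w) : v = w := by
  simp only [uu, Prod.mk.injEq] at h
  ext <;> linarith [h.1, h.2]

lemma ss_inj {v w : ℝ × ℝ} (h : ss v = ss w) : v = w := by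
  simp only [ss, Prod.mk.injEq] at h
  ext <;> linarith [h.1, h.2]

lemma ss_ss (v : ℝ × ℝ) : ss (ss v) = v := rfl

lemma run_nonneg (w : List Bool) {a : ℝ × ℝ} (h1 : 0 ≤ a.1) (h2 : 0 ≤ a.2) :
    0 ≤ (run w a).1 ∧ 0 ≤ (run w a).2 := by
  induction w with
  | nil => exact ⟨h1, h2⟩
  | cons x w ih =>
    cases x
    · exact ⟨ih.2, ih.1⟩
    · exact ⟨add_nonneg ih.1 ih.2, ih.2⟩

lemma run_neg (w : List Bool) (a : ℝ × ℝ) : run w (-a) = - run w a := by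
  induction w with
  | nil => rfl
  | cons x w ih =>
    cases x
    · simp [run, ih, ss]
    · simp [run, ih, uu]; ring

lemma run_rep_true (n : ℕ) (a : ℝ × ℝ) :
    run (List.replicate n true) a = (a.1 + n * a.2, a.2) := by
  induction n with
  | zero => simp [run]
  | succ n ih => simp only [List.replicate_succ, run, ih, uu]; push_cast; ext <;> simp; ring

/-- `v` is the unique maximizer of the functional `(p, q)` over the `k`-step points. -/
def EXc (k : ℕ) (p q : ℝ) (a v : ℝ × ℝ) : Prop :=
  (∃ w : List Bool, w.length = k ∧ run w a = v) ∧
    ∀ w : List Bool, w.length = k → run w a ≠ v →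
      p * (run w a).1 + q * (run w a).2 < p * v.1 + q * v.2

lemma EXc_eq {k : ℕ} {p q : ℝ} {a v : ℝ × ℝ} (h : EXc k p q a v) {w : List Bool}
    (hw : w.length = k) (hle : p * v.1 + q * v.2 ≤ p * (run w a).1 + q * (run w a).2) :
    run w a = v := by
  by_contra hne
  exact absurd (h.2 w hw hne) (not_lt.mpr hle)

lemma EXc_uu {k : ℕ} {p q : ℝ} {a v : ℝ × ℝ} {w : List Bool} (h : EXc (k + 1) p q a v)
    (hw : w.length = k) (hv : uu (run w a) = v) : EXc k p (p + q) a (run w a) := by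
  refine ⟨⟨w, hw, rfl⟩, fun w' hw' hne => ?_⟩
  have := h.2 (true :: w') (by simp [hw']) (by
    intro h'; apply hne; apply uu_inj; rw [hv]; exact h')
  rw [← hv] at this
  simp only [run, uu] at this
  linarith

lemma EXc_ss {k : ℕ} {p q : ℝ} {a v : ℝ × ℝ} {w : List Bool} (h : EXc (k + 1) p q a v)
    (hw : w.length = k) (hv : ss (run w a) = v) : EXc k q p a (run w a) := by
  refine ⟨⟨w, hw, rfl⟩, fun w' hw' hne => ?_⟩
  have := h.2 (false :: w') (by simp [hw']) (by
    intro h'; apply hne; apply ss_inj; rw [hv]; exact h')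
  rw [← hv] at this
  simp only [run, ss] at this
  linarith

/-- A word is all `true` or of the form `true^l false rest`. -/
lemma word_split (w : List Bool) : w = List.replicate w.length true ∨
    ∃ l w', w = List.replicate l true ++ false :: w' := by
  induction w with
  | nil => left; rfl
  | cons x w ih =>
    cases x
    · right; exact ⟨0, w, rfl⟩
    · rcases ih with h | ⟨l, w', h⟩
      · left; rw [List.length_cons, List.replicate_succ, ← h]
      · right; exact ⟨l + 1, w', by rw [h]; rfl⟩

/-! Negative functionals -/

lemma run_rep_false (n : ℕ) (a : ℝ × ℝ) :
    run (List.replicate n false) a = if Even n then a else ss a := by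
  induction n with
  | zero => simp [run]
  | succ n ih =>
    rw [List.replicate_succ]
    simp only [run, ih, Nat.even_add_one]
    by_cases h : Even n <;> simp [h, ss_ss]

lemma neg_class (k : ℕ) : ∀ (p q : ℝ) (b v : ℝ × ℝ), 0 ≤ b.1 → 0 ≤ b.2 → p ≤ 0 → q ≤ 0 →
    EXc k p q b v → v = run (List.replicate k false) b ∨
      ∃ i j, i + j + 1 = k ∧
        v = run (List.replicate i false ++ true :: List.replicate j false) b := by
  induction k with
  | zero =>
    rintro p q b v - - - - ⟨⟨w, hw, rfl⟩, -⟩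
    left
    rw [List.length_eq_zero_iff.mp hw]; rfl
  | succ k ih =>
    intro p q b v hb1 hb2 hp hq h
    obtain ⟨⟨w, hw, hv⟩, -⟩ := id h
    match w, hw, hv with
    | false :: w, hw, hv =>
      have hw' : w.length = k := by simpa using hw
      rcases ih q p b _ hb1 hb2 hq hp (EXc_ss h hw' hv) with h1 | ⟨i, j, hij, h1⟩
      · left
        rw [← hv]; simp only [run, h1, List.replicate_succ]
      · right
        refine ⟨i + 1, j, by omega, ?_⟩
        rw [← hv]; simp only [run, h1, List.replicate_succ, List.cons_append]
    | true :: w, hw, hv =>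
      have hw' : w.length = k := by simpa using hw
      rcases ih p (p + q) b _ hb1 hb2 hp (by linarith) (EXc_uu h hw' hv) with h1 | ⟨i, j, hij, h1⟩
      · right
        refine ⟨0, k, by omega, ?_⟩
        rw [← hv]; simp only [run, h1, List.replicate_zero, List.nil_append]
      · left
        symm
        apply EXc_eq h (by simp)
        rw [← hv]
        simp only [run, h1]
        rw [run_append, ← hij, show i + j + 1 + 1 = (i + 2) + j by ring, List.replicate_add,
          run_append]
        obtain ⟨h3, h4⟩ := run_nonneg (List.replicate j false) hb1 hb2
        simp only [run]
        generalize run (List.replicate j false) b = u at h3 h4 ⊢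
        rw [run_rep_false, run_rep_false]
        by_cases hi : Even i <;> simp [hi, uu, ss, Nat.even_add] <;> nlinarith

/-! Mixed functionals -/

lemma mixR_class (k : ℕ) : ∀ (p q : ℝ) (b v : ℝ × ℝ), 0 ≤ b.1 → 0 ≤ b.2 → 0 ≤ p → q ≤ 0 →
    EXc k p q b v → v = run (List.replicate k true) b ∨
      (∃ i j, i + j + 1 = k ∧
        v = run (List.replicate i true ++ false :: List.replicate j true) b) ∨
      ∃ j m p' q' v', j + m = k ∧ 0 ≤ p' ∧ 0 ≤ q' ∧ EXc m p' q' b v' ∧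
        v = run (List.replicate j true) v' := by
  induction k with
  | zero =>
    rintro p q b v - - - - ⟨⟨w, hw, rfl⟩, -⟩
    left
    rw [List.length_eq_zero_iff.mp hw]; rfl
  | succ k ih =>
    intro p q b v hb1 hb2 hp hq h
    have key : ∀ w : List Bool, w.length = k → uu (run w b) = v → v = run (List.replicate (k + 1) true) b ∨
      (∃ i j, i + j + 1 = k + 1 ∧
        v = run (List.replicate i true ++ false :: List.replicate j true) b) ∨
      ∃ j m p' q' v', j + m = k + 1 ∧ 0 ≤ p' ∧ 0 ≤ q' ∧ EXc m p' q' b v' ∧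
        v = run (List.replicate j true) v' := by
      intro w hw hv
      have h' := EXc_uu h hw hv
      by_cases hpq : 0 ≤ p + q
      · right; right
        exact ⟨1, k, p, p + q, _, by omega, hp, hpq, h', hv.symm⟩
      · rcases ih p (p + q) b _ hb1 hb2 hp (by linarith) h' with
          h1 | ⟨i, j, hij, h1⟩ | ⟨j, m, p', q', v', hjm, hp', hq', hE, h1⟩
        · left
          rw [← hv, h1, List.replicate_succ]; rfl
        · right; left
          refine ⟨i + 1, j, by omega, ?_⟩
          rw [← hv, h1, List.replicate_succ]; rfl
        · right; right
          refine ⟨j + 1, m, p', q', v', by omega, hp', hq', hE, ?_⟩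
          rw [← hv, h1, List.replicate_succ]; rfl
    obtain ⟨⟨w, hw, hv⟩, -⟩ := id h
    match w, hw, hv with
    | true :: w, hw, hv => exact key w (by simpa using hw) hv
    | false :: w, hw, hv =>
      have hw' : w.length = k := by simpa using hw
      rcases word_split w with h1 | ⟨l, w', h1⟩
      · right; left
        refine ⟨0, k, by omega, ?_⟩
        rw [← hv, h1, hw']; rfl
      · have hl : (List.replicate (l + 2) true ++ w').length = k + 1 := by
          have := congrArg List.length h1
          simp at this ⊢; omega
        have h2 : run (List.replicate (l + 2) true ++ w') b = v := by
          apply EXc_eq h hl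
          rw [← hv, h1]
          simp only [run, run_append, run_rep_true, ss]
          obtain ⟨h3, h4⟩ := run_nonneg w' hb1 hb2
          generalize run w' b = u at h3 h4 ⊢
          push_cast
          have : (0 : ℝ) ≤ l := Nat.cast_nonneg l
          have e1 : 0 ≤ p * ((l + 2) * u.2) := by positivity
          have e2 : 0 ≤ (-q) * (l * u.1) := mul_nonneg (by linarith) (by positivity)
          nlinarith
        apply key (List.replicate (l + 1) true ++ w') (by simp at hl ⊢; omega)
        rw [← h2]; rfl

lemma mixL_class (k : ℕ) (p q : ℝ) (b v : ℝ × ℝ) (hb1 : 0 ≤ b.1) (hb2 : 0 ≤ b.2) (hp : p ≤ 0)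
    (hq : 0 ≤ q) (h : EXc k p q b v) : v = run (List.replicate k true) b ∨
      ∃ m v', m + 1 = k ∧ EXc m q p b v' ∧ v = ss v' := by
  obtain ⟨⟨w, hw, hv⟩, -⟩ := id h
  rcases word_split w with h1 | ⟨l, w', h1⟩
  · left; rw [← hv, h1, hw]
  · right
    have hl : l + w'.length + 1 = k := by
      have := congrArg List.length h1
      simp at this; omega
    have h2 : run (false :: (List.replicate l true ++ w')) b = v := by
      apply EXc_eq h (by simp; omega)
      rw [← hv, h1]
      simp only [run, run_append, run_rep_true, ss]
      obtain ⟨h3, h4⟩ := run_nonneg w' hb1 hb2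
      generalize run w' b = u at h3 h4 ⊢
      have : (0 : ℝ) ≤ l := Nat.cast_nonneg l
      have e1 : 0 ≤ q * (l * u.2) := by positivity
      have e2 : 0 ≤ (-p) * (l * u.1) := mul_nonneg (by linarith) (by positivity)
      nlinarith
    subst hl
    exact ⟨_, _, rfl, EXc_ss h (by simp) h2, h2.symm⟩

/-! Positive functionals -/

def vv (m : ℕ) (u : ℝ × ℝ) : ℝ × ℝ := (m * u.1 + u.2, u.1)

def act : List ℕ → ℝ × ℝ → ℝ × ℝ
  | [], u => u
  | m :: L, u => vv m (act L u)

def cost : List ℕ → ℕ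
  | [] => 0
  | m :: L => m + 1 + cost L

lemma act_append (L L' : List ℕ) (a : ℝ × ℝ) : act (L ++ L') a = act L (act L' a) := by
  induction L with
  | nil => rfl
  | cons x w ih => simp [act, ih]

lemma cost_append (L L' : List ℕ) : cost (L ++ L') = cost L + cost L' := by
  induction L with
  | nil => simp [cost]
  | cons x w ih => simp [cost, ih]; omega

lemma cost_rep (n m : ℕ) : cost (List.replicate n m) = n * (m + 1) := by
  induction n with
  | zero => simp [cost]
  | succ n ih => simp [List.replicate_succ, cost, ih]; ring

lemma word_to_list (w : List Bool) : ∃ L, cost L = w.length + 1 ∧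
    ∀ b, run w b = act L (ss b) := by
  induction w with
  | nil => exact ⟨[0], rfl, fun b => by simp [run, act, vv, ss]⟩
  | cons x w ih =>
    obtain ⟨L, hL, h⟩ := ih
    cases x
    · refine ⟨0 :: L, by simp [cost, hL]; omega, fun b => ?_⟩
      simp [run, act, vv, ss, h]
    · match L, hL, h with
      | [], hL, h => simp [cost] at hL
      | m :: L, hL, h =>
        refine ⟨(m + 1) :: L, by simp [cost] at hL ⊢; omega, fun b => ?_⟩
        simp [run, act, vv, uu, h]; ring

lemma list_to_word (L : List ℕ) : ∀ k, cost L = k + 1 → ∃ w : List Bool, w.length = k ∧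
    ∀ b, run w b = act L (ss b) := by
  induction L with
  | nil => intro k h; simp [cost] at h
  | cons m L ih =>
    intro k h
    match L, ih, h with
    | [], ih, h =>
      simp [cost] at h
      refine ⟨List.replicate k true, by simp, fun b => ?_⟩
      rw [run_rep_true]; simp [act, vv, ss, h]; ring
    | n :: L, ih, h =>
      obtain ⟨w, hw, h'⟩ := ih (n + cost L) (by simp [cost]; omega)
      refine ⟨List.replicate m true ++ false :: w, by simp [cost] at h ⊢; omega, fun b => ?_⟩
      rw [run_append, run_rep_true]; simp only [run, h', ss]
      conv_rhs => rw [act]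
      simp [vv]; ring

/-- Componentwise and strict-in-sum order. -/
def Lt2 (u v : ℝ × ℝ) : Prop := u.1 ≤ v.1 ∧ u.2 ≤ v.2 ∧ u.1 + u.2 < v.1 + v.2

def Le2 (u v : ℝ × ℝ) : Prop := u.1 ≤ v.1 ∧ u.2 ≤ v.2

lemma act_lt (L : List ℕ) {u v : ℝ × ℝ} (h : Lt2 u v) : Lt2 (act L u) (act L v) := by
  induction L with
  | nil => exact h
  | cons m L ih =>
    obtain ⟨h1, h2, h3⟩ := ih
    have := mul_le_mul_of_nonneg_left h1 (Nat.cast_nonneg (α := ℝ) m)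
    refine ⟨?_, ?_, ?_⟩ <;> simp only [act, vv] <;> linarith

lemma act_le (L : List ℕ) {u v : ℝ × ℝ} (h : Le2 u v) : Le2 (act L u) (act L v) := by
  induction L with
  | nil => exact h
  | cons m L ih =>
    obtain ⟨h1, h2⟩ := ih
    have := mul_le_mul_of_nonneg_left h1 (Nat.cast_nonneg (α := ℝ) m)
    refine ⟨?_, ?_⟩ <;> simp only [act, vv] <;> linarith

lemma act_nonneg (L : List ℕ) {u : ℝ × ℝ} (h1 : 0 ≤ u.1) (h2 : 0 ≤ u.2) :
    0 ≤ (act L u).1 ∧ 0 ≤ (act L u).2 := by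
  induction L with
  | nil => exact ⟨h1, h2⟩
  | cons m L ih =>
    obtain ⟨h1, h2⟩ := ih
    refine ⟨?_, ?_⟩ <;> simp only [act, vv] <;> positivity

lemma act_pos (L : List ℕ) {u : ℝ × ℝ} (h1 : 0 < u.1) (h2 : 0 < u.2) :
    0 < (act L u).1 ∧ 0 < (act L u).2 := by
  induction L with
  | nil => exact ⟨h1, h2⟩
  | cons m L ih =>
    obtain ⟨h1, h2⟩ := ih
    refine ⟨?_, ?_⟩ <;> simp only [act, vv] <;> positivity

/-- `P'` strictly dominates `P`. -/
def SDom (P P' : List ℕ) : Prop :=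
  cost P' = cost P ∧ (∀ s t : ℝ, 0 ≤ s → 0 ≤ t → Le2 (act P (s, t)) (act P' (s, t))) ∧
    ∀ s t : ℝ, 0 < s → 0 < t → (act P (s, t)).1 + (act P (s, t)).2 <
      (act P' (s, t)).1 + (act P' (s, t)).2

def Good (L : List ℕ) : Prop := ∀ A P D P', L = A ++ P ++ D → ¬ SDom P P'

lemma Good.factor {L A P D : List ℕ} (h : Good L) (hL : L = A ++ P ++ D) : Good P := by
  intro A' Q D' Q' hP
  exact h (A ++ A') Q (D' ++ D) Q' (by rw [hL, hP]; simp)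

lemma Good.not {P P' : List ℕ} (h : Good P) (h' : SDom P P') : False :=
  h [] P [] P' (by simp) h'

lemma max_good {k : ℕ} {p q : ℝ} {b v : ℝ × ℝ} (hb1 : 0 ≤ b.1) (hb2 : 0 ≤ b.2) (hp : 0 ≤ p)
    (hq : 0 ≤ q) (h : EXc k p q b v) : ∃ L, cost L = k + 1 ∧ v = act L (ss b) ∧ Good L := by
  have hfin : ({w : List Bool | w.length = k ∧ run w b = v}).Finite :=
    (List.finite_length_eq Bool k).subset fun w hw => hw.1
  obtain ⟨w, ⟨hwk, hwv⟩, hmax⟩ := Set.exists_max_image _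
    (fun w => (run w (1, 1)).1 + (run w (1, 1)).2) hfin h.1
  obtain ⟨L, hL, hrun⟩ := word_to_list w
  refine ⟨L, by omega, by rw [← hwv, hrun], ?_⟩
  rintro A P D P' hLe ⟨hc, hle, hlt⟩
  obtain ⟨w', hw', hrun'⟩ := list_to_word (A ++ P' ++ D) k (by
    rw [← hwk, ← hL, hLe]; simp [cost_append, hc])
  have e1 : run w' b = v := by
    apply EXc_eq h hw'
    rw [← hwv, hrun, hrun', hLe]
    simp only [act_append]
    obtain ⟨h3, h4⟩ := act_nonneg D (u := ss b) hb2 hb1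
    obtain ⟨h5, h6⟩ := act_le A (hle _ _ h3 h4)
    exact add_le_add (mul_le_mul_of_nonneg_left h5 hp) (mul_le_mul_of_nonneg_left h6 hq)
  have := hmax w' ⟨hw', e1⟩
  simp only [hrun, hrun', hLe, act_append] at this
  obtain ⟨h3, h4⟩ := act_pos D (u := ss (1, 1)) (by simp [ss]) (by simp [ss])
  have hl : Lt2 (act P (act D (ss (1, 1)))) (act P' (act D (ss (1, 1)))) :=
    ⟨(hle _ _ h3.le h4.le).1, (hle _ _ h3.le h4.le).2, hlt _ _ h3 h4⟩
  have := (act_lt A hl).2.2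
  linarith

lemma act_rep3 (i : ℕ) : ∃ x y : ℝ, 0 ≤ x ∧ 0 ≤ y ∧ 0 < x + y ∧
    ∀ u, act (List.replicate i 3) u = (x * (3 * u.1 + u.2) + y * u.1, x * u.1 + y * u.2) := by
  induction i with
  | zero => exact ⟨0, 1, by simp, by simp, by simp, fun u => by simp [act]⟩
  | succ i ih =>
    obtain ⟨x, y, hx, hy, hxy, h⟩ := ih
    refine ⟨3 * x + y, x, by positivity, hx, by linarith, fun u => ?_⟩
    simp only [List.replicate_succ, act, h, vv]
    ext <;> push_cast <;> ring

lemma sdom_big (m : ℕ) : SDom [m + 5] [m + 2, 2] := by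
  refine ⟨by simp [cost], fun s t hs ht => ⟨?_, ?_⟩, fun s t hs ht => ?_⟩ <;>
  · simp only [act, vv]; push_cast
    first | rw [← sub_nonneg] | rw [← sub_pos]
    ring_nf; positivity

lemma sdom_zero (a b : ℕ) : SDom [a, 0, b] [a + b + 2] := by
  refine ⟨by simp [cost]; ring, fun s t hs ht => ⟨?_, ?_⟩, fun s t hs ht => ?_⟩ <;>
  · simp only [act, vv]; push_cast
    first | rw [← sub_nonneg] | rw [← sub_pos]
    ring_nf; positivity

lemma sdom_one (a b : ℕ) : SDom [a, 1, b] [a + 1, b + 1] := by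
  refine ⟨by simp [cost]; ring, fun s t hs ht => ⟨?_, ?_⟩, fun s t hs ht => ?_⟩ <;>
  · simp only [act, vv]; push_cast
    first | rw [← sub_nonneg] | rw [← sub_pos]
    ring_nf; positivity

lemma sdom_2222 (c d : ℕ) : SDom [c + 1, 2, 2, 2, 2, d + 2] [c + 1, 3, 3, 3, d + 2] := by
  refine ⟨by simp [cost]; ring, fun s t hs ht => ⟨?_, ?_⟩, fun s t hs ht => ?_⟩ <;>
  · simp only [act, vv]; push_cast
    first | rw [← sub_nonneg] | rw [← sub_pos]
    ring_nf; positivity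

lemma sdom_44 (i : ℕ) : SDom ([4] ++ List.replicate i 3 ++ [4])
    ([3] ++ List.replicate i 3 ++ [2, 2]) := by
  obtain ⟨x, y, hx, hy, hxy, h⟩ := act_rep3 i
  refine ⟨by simp [cost, cost_append]; ring, fun s t hs ht => ⟨?_, ?_⟩, fun s t hs ht => ?_⟩
  · simp only [act, vv, act_append, h]; push_cast
    rw [← sub_nonneg]
    ring_nf; positivity
  · simp only [act, vv, act_append, h]; push_cast
    rw [← sub_nonneg]
    ring_nf; positivity
  · simp only [act, vv, act_append, h]; push_cast
    rw [← sub_pos]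
    rcases hx.lt_or_eq with hx' | rfl
    · ring_nf; positivity
    · have : 0 < y := by linarith
      ring_nf; positivity

lemma sdom_24 (c i : ℕ) : SDom ([c + 1, 2] ++ List.replicate i 3 ++ [4])
    ([c + 1, 3] ++ List.replicate i 3 ++ [3]) := by
  obtain ⟨x, y, hx, hy, hxy, h⟩ := act_rep3 i
  refine ⟨by simp [cost, cost_append]; ring, fun s t hs ht => ⟨?_, ?_⟩, fun s t hs ht => ?_⟩
  · simp only [act, vv, act_append, h]; push_cast
    rw [← sub_nonneg]
    ring_nf; positivity
  · simp only [act, vv, act_append, h]; push_cast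
    rw [← sub_nonneg]
    ring_nf; positivity
  · simp only [act, vv, act_append, h]; push_cast
    rw [← sub_pos]
    rcases hx.lt_or_eq with hx' | rfl
    · ring_nf; positivity
    · have : 0 < y := by linarith
      ring_nf; positivity

lemma sdom_42 (c i : ℕ) : SDom ([4] ++ List.replicate i 3 ++ [2, c + 1])
    ([3] ++ List.replicate i 3 ++ [3, c + 1]) := by
  obtain ⟨x, y, hx, hy, hxy, h⟩ := act_rep3 i
  refine ⟨by simp [cost, cost_append]; ring, fun s t hs ht => ⟨?_, ?_⟩, fun s t hs ht => ?_⟩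
  · simp only [act, vv, act_append, h]; push_cast
    rw [← sub_nonneg]
    ring_nf; positivity
  · simp only [act, vv, act_append, h]; push_cast
    rw [← sub_nonneg]
    ring_nf; positivity
  · simp only [act, vv, act_append, h]; push_cast
    rw [← sub_pos]
    rcases hx.lt_or_eq with hx' | rfl
    · ring_nf; positivity
    · have : 0 < y := by linarith
      ring_nf; positivity

lemma sdom_d (c i : ℕ) : SDom ([c + 1, 2, 3] ++ List.replicate i 3 ++ [2, 3])
    ([c + 1, 2, 2, 3] ++ List.replicate i 3 ++ [3]) := by
  obtain ⟨x, y, hx, hy, hxy, h⟩ := act_rep3 i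
  refine ⟨by simp [cost, cost_append]; ring, fun s t hs ht => ⟨?_, ?_⟩, fun s t hs ht => ?_⟩
  · simp only [act, vv, act_append, h]; push_cast
    rw [← sub_nonneg]
    ring_nf; positivity
  · simp only [act, vv, act_append, h]; push_cast
    rw [← sub_nonneg]
    ring_nf; positivity
  · simp only [act, vv, act_append, h]; push_cast
    rw [← sub_pos]
    rcases hx.lt_or_eq with hx' | rfl
    · ring_nf; positivity
    · have : 0 < y := by linarith
      ring_nf; positivity

lemma sdom_e (c i : ℕ) : SDom ([c + 1, 2, 3] ++ List.replicate i 3 ++ [2, 2, 3])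
    ([c + 1, 2, 2, 2, 3] ++ List.replicate i 3 ++ [3]) := by
  obtain ⟨x, y, hx, hy, hxy, h⟩ := act_rep3 i
  refine ⟨by simp [cost, cost_append]; ring, fun s t hs ht => ⟨?_, ?_⟩, fun s t hs ht => ?_⟩
  · simp only [act, vv, act_append, h]; push_cast
    rw [← sub_nonneg]
    ring_nf; positivity
  · simp only [act, vv, act_append, h]; push_cast
    rw [← sub_nonneg]
    ring_nf; positivity
  · simp only [act, vv, act_append, h]; push_cast
    rw [← sub_pos]
    rcases hx.lt_or_eq with hx' | rfl
    · ring_nf; positivity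
    · have : 0 < y := by linarith
      ring_nf; positivity

lemma sdom_f (c i : ℕ) : SDom ([c + 1, 2, 3] ++ List.replicate i 3 ++ [2, 2, 2, 3])
    ([c + 1, 3, 3] ++ List.replicate i 3 ++ [3, 3, 3]) := by
  obtain ⟨x, y, hx, hy, hxy, h⟩ := act_rep3 i
  refine ⟨by simp [cost, cost_append]; ring, fun s t hs ht => ⟨?_, ?_⟩, fun s t hs ht => ?_⟩
  · simp only [act, vv, act_append, h]; push_cast
    rw [← sub_nonneg]
    ring_nf; positivity
  · simp only [act, vv, act_append, h]; push_cast
    rw [← sub_nonneg]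
    ring_nf; positivity
  · simp only [act, vv, act_append, h]; push_cast
    rw [← sub_pos]
    rcases hx.lt_or_eq with hx' | rfl
    · ring_nf; positivity
    · have : 0 < y := by linarith
      ring_nf; positivity

/-! Classification of good lists -/

lemma split_run (x : ℕ) (l : List ℕ) : l = List.replicate l.length x ∨
    ∃ i y l', y ≠ x ∧ l = List.replicate i x ++ y :: l' := by
  induction l with
  | nil => left; rfl
  | cons z l ih =>
    by_cases hz : z = x
    · subst hz
      rcases ih with h | ⟨i, y, l', hy, h⟩
      · left; rw [List.length_cons, List.replicate_succ, ← h]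
      · right; exact ⟨i + 1, y, l', hy, by rw [h]; rfl⟩
    · right; exact ⟨0, z, l, hz, rfl⟩

lemma last_two (r : ℕ) : ∀ c, 1 ≤ c → ∃ A c0,
    c :: List.replicate (r + 1) 2 = A ++ [c0 + 1, 2] := by
  induction r with
  | zero =>
    intro c hc
    exact ⟨[], c - 1, by simp; omega⟩
  | succ r ih =>
    intro c hc
    obtain ⟨A, c0, h⟩ := ih 2 (by norm_num)
    exact ⟨c :: A, c0, by rw [List.replicate_succ, h]; rfl⟩

lemma last_three (i : ℕ) : ∀ c, 1 ≤ c → ∃ A c0,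
    c :: List.replicate i 3 = A ++ [c0 + 1] := by
  induction i with
  | zero =>
    intro c hc
    exact ⟨[], c - 1, by simp; omega⟩
  | succ r ih =>
    intro c hc
    obtain ⟨A, c0, h⟩ := ih 3 (by norm_num)
    exact ⟨c :: A, c0, by rw [List.replicate_succ, h]; rfl⟩

lemma run_le_three {r c e : ℕ} {rest : List ℕ} (he : 2 ≤ e)
    (h : Good ((c + 1) :: List.replicate r 2 ++ e :: rest)) : r ≤ 3 := by
  by_contra hr
  obtain ⟨r', rfl⟩ : ∃ r', r = r' + 4 := ⟨r - 4, by omega⟩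
  cases r' with
  | zero =>
    obtain ⟨d, rfl⟩ : ∃ d, e = d + 2 := ⟨e - 2, by omega⟩
    exact (h.factor (A := []) (P := [c + 1, 2, 2, 2, 2, d + 2]) (D := rest) rfl).not
      (sdom_2222 c d)
  | succ n =>
    exact (h.factor (A := []) (P := [c + 1, 2, 2, 2, 2, 0 + 2])
      (D := List.replicate n 2 ++ e :: rest) rfl).not (sdom_2222 c 0)

lemma no_two_four {r c j : ℕ} {rest : List ℕ}
    (h : Good ((c + 1) :: List.replicate (r + 1) 2 ++ (List.replicate j 3 ++ 4 :: rest))) :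
    False := by
  obtain ⟨A, c0, hA⟩ := last_two r (c + 1) (by omega)
  exact (h.factor (A := A) (P := [c0 + 1, 2] ++ List.replicate j 3 ++ [4]) (D := rest)
    (by rw [hA]; simp)).not (sdom_24 c0 j)

lemma no_def {r c j s : ℕ} {rest : List ℕ} (hs : s ≤ 2)
    (h : Good ((c + 1) :: List.replicate (r + 1) 2 ++ (List.replicate (j + 1) 3 ++
      (List.replicate (s + 1) 2 ++ 3 :: rest)))) : False := by
  obtain ⟨A, c0, hA⟩ := last_two r (c + 1) (by omega)
  rw [hA] at h
  interval_cases s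
  · exact (h.factor (A := A) (P := [c0 + 1, 2, 3] ++ List.replicate j 3 ++ [2, 3]) (D := rest)
      (by simp [List.replicate_succ])).not (sdom_d c0 j)
  · exact (h.factor (A := A) (P := [c0 + 1, 2, 3] ++ List.replicate j 3 ++ [2, 2, 3]) (D := rest)
      (by simp [List.replicate_succ])).not (sdom_e c0 j)
  · exact (h.factor (A := A) (P := [c0 + 1, 2, 3] ++ List.replicate j 3 ++ [2, 2, 2, 3])
      (D := rest) (by simp [List.replicate_succ])).not (sdom_f c0 j)

lemma mid_class (c d : ℕ) (mid : List ℕ) (hc : 2 ≤ c) (hd : 2 ≤ d)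
    (hm : ∀ x ∈ mid, x = 2 ∨ x = 3 ∨ x = 4) (hG : Good (c :: mid ++ [d])) :
    (∃ i j, mid = List.replicate i 3 ++ [4] ++ List.replicate j 3 ++ []) ∨
    ∃ i r j s, r ≤ 3 ∧ s ≤ 3 ∧ mid = List.replicate i 3 ++ List.replicate r 2 ++
      List.replicate j 3 ++ List.replicate s 2 := by
  rcases split_run 3 mid with h | ⟨i, y, l, hy, rfl⟩
  · right
    exact ⟨mid.length, 0, 0, 0, by norm_num, by norm_num, by simpa using h⟩
  have hy' : y = 2 ∨ y = 4 := by
    rcases hm y (by simp) with h | h | h <;> tauto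
  rcases hy' with rfl | rfl
  · right
    obtain ⟨A, c0, hA⟩ := last_three i c (by omega)
    rw [← List.cons_append, hA] at hG
    replace hG : Good ((c0 + 1) :: (2 :: l) ++ [d]) :=
      hG.factor (A := A) (P := (c0 + 1) :: (2 :: l) ++ [d]) (D := []) (by simp)
    replace hm : ∀ x ∈ 2 :: l, x = 2 ∨ x = 3 ∨ x = 4 := fun x hx => hm x (by
      rw [List.mem_append]; right; exact hx)
    rcases split_run 2 (2 :: l) with h | ⟨r, z, l', hz, h⟩
    · rw [h] at hG
      refine ⟨i, _, 0, 0, run_le_three hd hG, by norm_num, ?_⟩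
      rw [h]; simp
    · rw [h] at hG hm ⊢
      have hr1 : 1 ≤ r := by
        rcases r with _ | r
        · simp at h; omega
        · omega
      obtain ⟨r, rfl⟩ : ∃ r', r = r' + 1 := ⟨r - 1, by omega⟩
      clear h hy hr1
      have hz' : z = 3 ∨ z = 4 := by
        rcases hm z (by simp) with h | h | h <;> tauto
      have hr3 : r + 1 ≤ 3 := run_le_three (e := z) (rest := l' ++ [d]) (by omega) (by
        simpa using hG)
      rcases hz' with rfl | rfl
      · rcases split_run 3 (3 :: l') with h | ⟨j, t, l2, ht, h⟩
        · refine ⟨i, r + 1, (3 :: l').length, 0, hr3, by norm_num, ?_⟩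
          rw [← h]; simp
        · have hj1 : 1 ≤ j := by
            rcases j with _ | j
            · simp at h; omega
            · omega
          rw [h] at hG hm ⊢
          obtain ⟨j, rfl⟩ : ∃ r', j = r' + 1 := ⟨j - 1, by omega⟩
          clear h hj1
          have ht' : t = 2 ∨ t = 4 := by
            rcases hm t (by simp) with h | h | h <;> tauto
          rcases ht' with rfl | rfl
          · have hG' : Good ((2 + 1) :: (2 :: l2) ++ [d]) :=
              hG.factor (A := (c0 + 1) :: List.replicate (r + 1) 2 ++ List.replicate j 3)
                (P := 3 :: (2 :: l2) ++ [d]) (D := []) (by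
                  rw [List.replicate_succ' (n := j)]; simp)
            rcases split_run 2 (2 :: l2) with h | ⟨s, u, l3, hu, h⟩
            · rw [h] at hG'
              refine ⟨i, r + 1, j + 1, _, hr3, run_le_three hd hG', ?_⟩
              rw [h]; simp
            · exfalso
              have hs1 : 1 ≤ s := by
                rcases s with _ | s
                · simp at h; omega
                · omega
              rw [h] at hG hm hG'
              obtain ⟨s, rfl⟩ : ∃ r', s = r' + 1 := ⟨s - 1, by omega⟩
              have hu' : u = 3 ∨ u = 4 := by
                rcases hm u (by simp) with h | h | h <;> tauto
              have hs3 : s + 1 ≤ 3 := run_le_three (e := u) (rest := l3 ++ [d]) (by omega) (by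
                simpa using hG')
              rcases hu' with rfl | rfl
              · exact no_def (r := r) (c := c0) (j := j) (s := s) (rest := l3 ++ [d]) (by omega)
                  (by simpa using hG)
              · exact no_two_four (r := s) (c := 2) (j := 0) (rest := l3 ++ [d])
                  (by simpa using hG')
          · exact (no_two_four (r := r) (c := c0) (j := j + 1) (rest := l2 ++ [d])
              (by simpa using hG)).elim
      · exact (no_two_four (r := r) (c := c0) (j := 0) (rest := l' ++ [d])
          (by simpa using hG)).elim
  · left
    rcases split_run 3 l with h | ⟨j, z, l', hz, rfl⟩
    · refine ⟨i, l.length, ?_⟩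
      conv_lhs => rw [h]
      simp
    · exfalso
      have hz' : z = 2 ∨ z = 4 := by
        rcases hm z (by simp) with h | h | h <;> tauto
      rcases hz' with rfl | rfl
      · obtain ⟨e, rest, he, hle⟩ : ∃ e rest, 2 ≤ e ∧ l' ++ [d] = e :: rest := by
          cases l' with
          | nil => exact ⟨d, [], hd, rfl⟩
          | cons e l' =>
            refine ⟨e, l' ++ [d], ?_, rfl⟩
            rcases hm e (by simp) with h | h | h <;> omega
        obtain ⟨e, rfl⟩ : ∃ r', e = r' + 1 := ⟨e - 1, by omega⟩
        exact (hG.factor (A := c :: List.replicate i 3)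
          (P := [4] ++ List.replicate j 3 ++ [2, e + 1]) (D := rest) (by simp [hle])).not
          (sdom_42 e j)
      · exact (hG.factor (A := c :: List.replicate i 3)
          (P := [4] ++ List.replicate j 3 ++ [4]) (D := l' ++ [d]) (by simp)).not (sdom_44 j)

lemma good_le_four {L : List ℕ} (h : Good L) : ∀ x ∈ L, x ≤ 4 := by
  intro x hx
  by_contra hx4
  obtain ⟨m, rfl⟩ : ∃ m, x = m + 5 := ⟨x - 5, by omega⟩
  obtain ⟨A, D, rfl⟩ := List.append_of_mem hx
  exact (h.factor (A := A) (P := [m + 5]) (D := D) (by simp)).not (sdom_big m)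

lemma good_interior {a : ℕ} {mid D : List ℕ} {b : ℕ} (h : Good (a :: mid ++ b :: D)) :
    ∀ x ∈ mid, x = 2 ∨ x = 3 ∨ x = 4 := by
  intro x hx
  have h4 := good_le_four h x (by simp [hx])
  obtain ⟨A, E, rfl⟩ := List.append_of_mem hx
  obtain ⟨A', a', hA⟩ : ∃ A' a', a :: A = A' ++ [a'] :=
    ⟨(a :: A).dropLast, (a :: A).getLast (by simp), (List.dropLast_append_getLast (by simp)).symm⟩
  obtain ⟨e, E', hE⟩ : ∃ e E', E ++ b :: D = e :: E' := by
    cases E with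
    | nil => exact ⟨b, D, rfl⟩
    | cons e E => exact ⟨e, E ++ b :: D, rfl⟩
  have hf : Good [a', x, e] := h.factor (A := A') (P := [a', x, e]) (D := E') (by
    have : a :: (A ++ x :: E) ++ b :: D = (a :: A) ++ x :: (E ++ b :: D) := by simp
    rw [this, hA, hE]; simp)
  have h0 : x ≠ 0 := by rintro rfl; exact hf.not (sdom_zero _ _)
  have h1 : x ≠ 1 := by rintro rfl; exact hf.not (sdom_one _ _)
  omega

/-- Short lists with small entries. -/
def TT : Set (List ℕ) := {l | l.length ≤ 3 ∧ ∀ x ∈ l, x ≤ 4}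

lemma TT_finite : TT.Finite := by
  have : TT ⊆ (fun l : List (Fin 5) => l.map Fin.val) '' {l | l.length ≤ 3} := by
    rintro l ⟨h1, h2⟩
    refine ⟨l.pmap (fun x hx => (⟨x, hx⟩ : Fin 5)) (fun x hx => Nat.lt_succ_of_le (h2 x hx)),
      by simpa using h1, ?_⟩
    simp [List.map_pmap]
  exact ((List.finite_length_le (Fin 5) 3).image _).subset this

lemma good_form {L : List ℕ} (h : Good L) : ∃ A ∈ TT, ∃ B ∈ TT, ∃ C ∈ TT, ∃ D ∈ TT, ∃ i j,
    L = A ++ (List.replicate i 3 ++ B ++ List.replicate j 3 ++ C) ++ D := by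
  have h4 := good_le_four h
  have hnil : ([] : List ℕ) ∈ TT := ⟨by simp, by simp⟩
  by_cases hl : L.length ≤ 3
  · exact ⟨L, ⟨hl, h4⟩, [], hnil, [], hnil, [], hnil, 0, 0, by simp⟩
  obtain ⟨p, L1, rfl⟩ : ∃ p L1, L = p :: L1 := List.exists_cons_of_length_pos (by omega)
  obtain ⟨p', L2, rfl⟩ : ∃ p L2, L1 = p :: L2 :=
    List.exists_cons_of_length_pos (by simp at hl; omega)
  have hL2 : L2 ≠ [] := by rintro rfl; simp at hl
  obtain ⟨L3, q, rfl⟩ : ∃ L3 q, L2 = L3 ++ [q] :=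
    ⟨_, _, (List.dropLast_append_getLast hL2).symm⟩
  have hL3 : L3 ≠ [] := by rintro rfl; simp at hl
  obtain ⟨mid, q', rfl⟩ : ∃ L4 q, L3 = L4 ++ [q] :=
    ⟨_, _, (List.dropLast_append_getLast hL3).symm⟩
  have hinter := good_interior (a := p) (mid := p' :: mid ++ [q']) (b := q) (D := [])
    (by simpa using h)
  have hp' := hinter p' (by simp)
  have hq' := hinter q' (by simp)
  have hm := mid_class p' q' mid (by omega) (by omega) (fun x hx => hinter x (by simp [hx]))
    (h.factor (A := [p]) (D := [q]) (by simp))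
  have hA : [p, p'] ∈ TT := ⟨by simp, fun x hx => h4 x (by simp at hx ⊢; tauto)⟩
  have hD : [q', q] ∈ TT := ⟨by simp, fun x hx => h4 x (by simp at hx ⊢; tauto)⟩
  rcases hm with ⟨i, j, rfl⟩ | ⟨i, r, j, s, hr, hs, rfl⟩
  · exact ⟨_, hA, [4], ⟨by simp, by simp⟩, [], hnil, _, hD, i, j, by simp⟩
  · refine ⟨_, hA, List.replicate r 2, ⟨by simpa using hr, ?_⟩, List.replicate s 2,
      ⟨by simpa using hs, ?_⟩, _, hD, i, j, by simp⟩
    · intro x hx; rw [List.eq_of_mem_replicate hx]; norm_num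
    · intro x hx; rw [List.eq_of_mem_replicate hx]; norm_num

/-! Counting -/

def Bd {α : Type*} (s : Set α) (n : ℕ) : Prop := ∃ F : Finset α, s ⊆ (F : Set α) ∧ F.card ≤ n

lemma Bd.mono {α : Type*} {s t : Set α} {m n : ℕ} (h : Bd s m) (hst : t ⊆ s) (hmn : m ≤ n) :
    Bd t n := by
  obtain ⟨F, h1, h2⟩ := h
  exact ⟨F, hst.trans h1, h2.trans hmn⟩

open Classical in
lemma Bd.union {α : Type*} {s t : Set α} {m n : ℕ} (h : Bd s m) (h' : Bd t n) :
    Bd (s ∪ t) (m + n) := by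
  obtain ⟨F, h1, h2⟩ := h
  obtain ⟨F', h1', h2'⟩ := h'
  refine ⟨F ∪ F', ?_, (Finset.card_union_le _ _).trans (by omega)⟩
  rw [Finset.coe_union]; exact Set.union_subset_union h1 h1'

open Classical in
lemma Bd.image {α β : Type*} {s : Set α} {m : ℕ} (h : Bd s m) (f : α → β) : Bd (f '' s) m := by
  obtain ⟨F, h1, h2⟩ := h
  refine ⟨F.image f, ?_, Finset.card_image_le.trans h2⟩
  rw [Finset.coe_image]; exact Set.image_mono h1

lemma Bd.single {α : Type*} (a : α) : Bd {a} 1 := ⟨{a}, by simp, by simp⟩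

open Classical in
lemma Bd.biUnion {ι α : Type*} (I : Finset ι) (s : ι → Set α) (n : ℕ)
    (h : ∀ i ∈ I, Bd (s i) n) : Bd (⋃ i ∈ I, s i) (I.card * n) := by
  choose! F h1 h2 using h
  refine ⟨I.biUnion F, ?_, Finset.card_biUnion_le_card_mul _ _ _ h2⟩
  rw [Finset.coe_biUnion]
  exact Set.iUnion₂_mono h1

def Lset (k : ℕ) : Set (List ℕ) := {L | cost L = k + 1 ∧ Good L}

open Classical in
lemma Lset_bd : ∃ G : ℕ, ∀ k, Bd (Lset k) (G * (k + 1)) := by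
  set T := TT_finite.toFinset with hT
  refine ⟨T.card * T.card * T.card * T.card, fun k => ?_⟩
  set g : (((List ℕ × List ℕ) × List ℕ) × List ℕ) × ℕ → List ℕ := fun x =>
    x.1.1.1.1 ++ (List.replicate x.2 3 ++ x.1.1.1.2 ++
      List.replicate ((k + 1 - (cost x.1.1.1.1 + x.2 * 4 + cost x.1.1.1.2 + cost x.1.1.2 +
        cost x.1.2)) / 4) 3 ++ x.1.1.2) ++ x.1.2 with hg
  refine ⟨((((T ×ˢ T) ×ˢ T) ×ˢ T) ×ˢ Finset.range (k + 1)).image g, ?_, ?_⟩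
  · rintro L ⟨hc, hG⟩
    obtain ⟨A, hA, B, hB, C, hC, D, hD, i, j, rfl⟩ := good_form hG
    simp only [cost_append, cost_rep] at hc
    rw [Finset.coe_image]
    refine ⟨((((A, B), C), D), i), ?_, ?_⟩
    · simp [hT, hA, hB, hC, hD]; omega
    · simp only [hg]
      rw [show (k + 1 - (cost A + i * 4 + cost B + cost C + cost D)) / 4 = j by omega]
  · refine Finset.card_image_le.trans ?_
    simp [Finset.card_product]

def Ex (k : ℕ) (b : ℝ × ℝ) : Set (ℝ × ℝ) := {v | ∃ p q, EXc k p q b v}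

def MaxS (k : ℕ) (b : ℝ × ℝ) : Set (ℝ × ℝ) := {v | ∃ p q, 0 ≤ p ∧ 0 ≤ q ∧ EXc k p q b v}

def RS (k : ℕ) (b : ℝ × ℝ) : Set (ℝ × ℝ) := {v | ∃ p q, 0 ≤ p ∧ q ≤ 0 ∧ EXc k p q b v}

def LS (k : ℕ) (b : ℝ × ℝ) : Set (ℝ × ℝ) := {v | ∃ p q, p ≤ 0 ∧ 0 ≤ q ∧ EXc k p q b v}

def NegS (k : ℕ) (b : ℝ × ℝ) : Set (ℝ × ℝ) := {v | ∃ p q, p ≤ 0 ∧ q ≤ 0 ∧ EXc k p q b v}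

lemma MaxS_bd {G : ℕ} (hG : ∀ k, Bd (Lset k) (G * (k + 1))) (k : ℕ) {b : ℝ × ℝ} (hb1 : 0 ≤ b.1)
    (hb2 : 0 ≤ b.2) : Bd (MaxS k b) (G * (k + 1)) := by
  refine ((hG k).image (fun L => act L (ss b))).mono ?_ le_rfl
  rintro v ⟨p, q, hp, hq, h⟩
  obtain ⟨L, h1, h2, h3⟩ := max_good hb1 hb2 hp hq h
  exact ⟨L, ⟨h1, h3⟩, h2.symm⟩

lemma NegS_bd (k : ℕ) {b : ℝ × ℝ} (hb1 : 0 ≤ b.1) (hb2 : 0 ≤ b.2) :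
    Bd (NegS k b) (1 + (k + 1)) := by
  have h1 := (Bd.single (run (List.replicate k false) b)).union
    (Bd.biUnion (Finset.range (k + 1)) (fun i => {run (List.replicate i false ++ true ::
      List.replicate (k - 1 - i) false) b}) 1 (fun i _ => Bd.single _))
  refine h1.mono ?_ (by simp)
  rintro v ⟨p, q, hp, hq, h⟩
  rcases neg_class k p q b v hb1 hb2 hp hq h with h | ⟨i, j, hij, h⟩
  · left; exact h
  · right
    simp only [Set.mem_iUnion]
    refine ⟨i, by simp; omega, ?_⟩
    rw [show k - 1 - i = j by omega]; exact h

lemma RS_bd {G : ℕ} (hG : ∀ k, Bd (Lset k) (G * (k + 1))) (k : ℕ) {b : ℝ × ℝ} (hb1 : 0 ≤ b.1)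
    (hb2 : 0 ≤ b.2) : Bd (RS k b) (1 + (k + 1) + (k + 1) * (G * (k + 1))) := by
  have h1 := ((Bd.single (run (List.replicate k true) b)).union
    (Bd.biUnion (Finset.range (k + 1)) (fun i => {run (List.replicate i true ++ false ::
      List.replicate (k - 1 - i) true) b}) 1 (fun i _ => Bd.single _))).union
    (Bd.biUnion (Finset.range (k + 1)) (fun j => run (List.replicate j true) '' MaxS (k - j) b)
      (G * (k + 1)) (fun j _ => ((MaxS_bd hG (k - j) hb1 hb2).image _).mono subset_rfl
        (Nat.mul_le_mul_left _ (by omega))))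
  refine h1.mono ?_ (by simp)
  rintro v ⟨p, q, hp, hq, h⟩
  rcases mixR_class k p q b v hb1 hb2 hp hq h with h | ⟨i, j, hij, h⟩ |
    ⟨j, m, p', q', v', hjm, hp', hq', hE, h⟩
  · left; left; exact h
  · left; right
    simp only [Set.mem_iUnion]
    refine ⟨i, by simp; omega, ?_⟩
    rw [show k - 1 - i = j by omega]; exact h
  · right
    simp only [Set.mem_iUnion]
    refine ⟨j, by simp; omega, v', ?_, h.symm⟩
    rw [show k - j = m by omega]
    exact ⟨p', q', hp', hq', hE⟩

lemma LS_bd {G : ℕ} (hG : ∀ k, Bd (Lset k) (G * (k + 1))) (k : ℕ) {b : ℝ × ℝ} (hb1 : 0 ≤ b.1)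
    (hb2 : 0 ≤ b.2) : Bd (LS k b) (1 + (1 + (k + 1) + (k + 1) * (G * (k + 1)))) := by
  have h1 := (Bd.single (run (List.replicate k true) b)).union
    ((RS_bd hG (k - 1) hb1 hb2).image ss)
  have hk : k - 1 + 1 ≤ k + 1 := by omega
  refine h1.mono ?_ (by gcongr)
  rintro v ⟨p, q, hp, hq, h⟩
  rcases mixL_class k p q b v hb1 hb2 hp hq h with h | ⟨m, v', hm, hE, h⟩
  · left; exact h
  · right
    refine ⟨v', ?_, h.symm⟩
    rw [show k - 1 = m by omega]
    exact ⟨q, p, hq, hp, hE⟩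

lemma Ex_bd_pos {G : ℕ} (hG : ∀ k, Bd (Lset k) (G * (k + 1))) (k : ℕ) {b : ℝ × ℝ} (hb1 : 0 ≤ b.1)
    (hb2 : 0 ≤ b.2) : Bd (Ex k b) ((7 + 3 * G) * (k + 1) ^ 2) := by
  refine ((((MaxS_bd hG k hb1 hb2).union (NegS_bd k hb1 hb2)).union (RS_bd hG k hb1 hb2)).union
    (LS_bd hG k hb1 hb2)).mono ?_ ?_
  · rintro v ⟨p, q, h⟩
    rcases le_total 0 p with hp | hp <;> rcases le_total 0 q with hq | hq
    · exact Or.inl (Or.inl (Or.inl ⟨p, q, hp, hq, h⟩))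
    · exact Or.inl (Or.inr ⟨p, q, hp, hq, h⟩)
    · exact Or.inr ⟨p, q, hp, hq, h⟩
    · exact Or.inl (Or.inl (Or.inr ⟨p, q, hp, hq, h⟩))
  · have : 0 ≤ G * k := Nat.zero_le _
    nlinarith [Nat.zero_le (G * k ^ 2), Nat.zero_le (k ^ 2)]

def Dfn (b : ℝ × ℝ) : Prop := (0 ≤ b.1 ∧ 0 ≤ b.2) ∨ (b.1 ≤ 0 ∧ b.2 ≤ 0)

lemma Ex_neg {k : ℕ} {b v : ℝ × ℝ} (h : v ∈ Ex k b) : -v ∈ Ex k (-b) := by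
  obtain ⟨p, q, ⟨w, hw, hv⟩, h⟩ := h
  refine ⟨-p, -q, ⟨w, hw, by rw [run_neg, hv]⟩, fun w' hw' hne => ?_⟩
  have := h w' hw' (by rintro rfl; exact hne (run_neg _ _))
  rw [run_neg]
  simp only [Prod.fst_neg, Prod.snd_neg]
  linarith

lemma Ex_bd_dfn {G : ℕ} (hG : ∀ k, Bd (Lset k) (G * (k + 1))) (k : ℕ) {b : ℝ × ℝ} (hb : Dfn b) :
    Bd (Ex k b) ((7 + 3 * G) * (k + 1) ^ 2) := by
  rcases hb with ⟨h1, h2⟩ | ⟨h1, h2⟩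
  · exact Ex_bd_pos hG k h1 h2
  · have := Ex_bd_pos hG k (b := -b) (by simpa using h1) (by simpa using h2)
    refine (this.image (fun v => -v)).mono ?_ le_rfl
    intro v hv
    exact ⟨-v, Ex_neg hv, neg_neg v⟩

/-! Euclidean sequence -/

open Classical in
def zz (a : ℝ × ℝ) : ℕ → ℝ × ℝ
  | 0 => a
  | i + 1 => if |(zz a i).2| < |(zz a i).1| then uu (zz a i) else uu (ss (zz a i))

lemma Ex_peel {n : ℕ} {b v : ℝ × ℝ} (h : v ∈ Ex (n + 1) b) :
    v ∈ Ex n (uu b) ∨ v ∈ Ex n (ss b) := by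
  obtain ⟨p, q, ⟨w, hw, hv⟩, h⟩ := h
  have hne : w ≠ [] := by rintro rfl; simp at hw
  obtain ⟨w', x, rfl⟩ : ∃ w' x, w = w' ++ [x] :=
    ⟨_, _, (List.dropLast_append_getLast hne).symm⟩
  have hw' : w'.length = n := by simpa using hw
  rw [run_append] at hv
  cases x
  · right
    refine ⟨p, q, ⟨w', hw', hv⟩, fun w2 hw2 => ?_⟩
    have := h (w2 ++ [false]) (by simp [hw2])
    rw [run_append] at this
    exact this
  · left
    refine ⟨p, q, ⟨w', hw', hv⟩, fun w2 hw2 => ?_⟩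
    have := h (w2 ++ [true]) (by simp [hw2])
    rw [run_append] at this
    exact this

lemma abs_of_mixed {b : ℝ × ℝ} (hb : ¬ Dfn b) (h : ¬ Dfn (uu b)) : |b.2| < |b.1| := by
  simp only [Dfn, uu, not_or, not_and_or, not_le] at hb h
  obtain ⟨h1, h2⟩ := hb
  obtain ⟨h3, h4⟩ := h
  rcases le_or_gt 0 b.1 with h5 | h5 <;> rcases le_or_gt 0 b.2 with h6 | h6
  · rcases h1 with h1 | h1 <;> linarith
  · rw [abs_of_nonneg h5, abs_of_neg h6]
    rcases h4 with h4 | h4 <;> linarith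
  · rw [abs_of_neg h5, abs_of_nonneg h6]
    rcases h3 with h3 | h3 <;> linarith
  · rcases h2 with h2 | h2 <;> linarith

lemma Dfn_ss {b : ℝ × ℝ} : Dfn (ss b) ↔ Dfn b := by
  simp only [Dfn, ss]; tauto

def WW : Finset (List Bool) := {[], [false], [true], [true, false]}

lemma Ex_reduce (a : ℝ × ℝ) (k : ℕ) : ∀ (n i : ℕ) (b v : ℝ × ℝ), i + n ≤ k →
    (b = zz a i ∨ b = ss (zz a i)) → ¬ Dfn b → v ∈ Ex n b →
    ∃ t i' w, t ≤ k ∧ i' ≤ k ∧ w ∈ WW ∧ v ∈ Ex t (run w (zz a i')) ∧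
      (Dfn (run w (zz a i')) ∨ t = 0) := by
  intro n
  induction n with
  | zero =>
    intro i b v hik hb hD hv
    rcases hb with rfl | rfl
    · exact ⟨0, i, [], by omega, by omega, by simp [WW], hv, Or.inr rfl⟩
    · exact ⟨0, i, [false], by omega, by omega, by simp [WW], hv, Or.inr rfl⟩
  | succ n ih =>
    intro i b v hik hb hD hv
    rcases Ex_peel hv with h | h
    · by_cases hU : Dfn (uu b)
      · rcases hb with rfl | rfl
        · exact ⟨n, i, [true], by omega, by omega, by simp [WW], h, Or.inl hU⟩
        · exact ⟨n, i, [true, false], by omega, by omega, by simp [WW], h, Or.inl hU⟩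
      · have hlt := abs_of_mixed hD hU
        refine ih (i + 1) (uu b) v (by omega) (Or.inl ?_) hU h
        rcases hb with rfl | rfl
        · rw [zz, if_pos hlt]
        · have : ¬ |(zz a i).2| < |(zz a i).1| := by
            simp only [ss] at hlt
            exact not_lt.mpr hlt.le
          rw [zz, if_neg this]
    · refine ih i (ss b) v (by omega) ?_ (by rwa [Dfn_ss]) h
      rcases hb with rfl | rfl
      · exact Or.inr rfl
      · exact Or.inl rfl

lemma Ex_zero (b : ℝ × ℝ) : Ex 0 b ⊆ {b} := by
  rintro v ⟨p, q, ⟨w, hw, hv⟩, -⟩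
  rw [List.length_eq_zero_iff.mp hw] at hv
  exact hv.symm

lemma Ex_bd {G : ℕ} (hG : ∀ k, Bd (Lset k) (G * (k + 1))) (k : ℕ) (a : ℝ × ℝ) :
    Bd (Ex k a) (4 * (7 + 3 * G) * (k + 1) ^ 4) := by
  set M := (7 + 3 * G) * (k + 1) ^ 2 with hM
  have hM1 : 1 ≤ M := by rw [hM]; exact Nat.succ_le_of_lt (by positivity)
  have key : ∀ t ∈ Finset.range (k + 1), ∀ i ∈ Finset.range (k + 1), ∀ w ∈ WW,
      Bd {v | v ∈ Ex t (run w (zz a i)) ∧ (Dfn (run w (zz a i)) ∨ t = 0)} M := by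
    intro t ht i _ w _
    by_cases hD : Dfn (run w (zz a i))
    · refine (Ex_bd_dfn hG t hD).mono (fun v hv => hv.1) ?_
      rw [hM]
      have : t ≤ k := by simp at ht; omega
      gcongr
    · refine (Bd.single (run w (zz a i))).mono ?_ hM1
      rintro v ⟨h1, h2⟩
      have h0 : t = 0 := by tauto
      subst h0
      exact Ex_zero _ h1
  have h1 := Bd.biUnion (Finset.range (k + 1)) _ _ (fun t ht =>
    Bd.biUnion (Finset.range (k + 1)) _ _ (fun i hi =>
      Bd.biUnion WW _ _ (fun w hw => key t ht i hi w hw)))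
  refine h1.mono ?_ ?_
  · intro v hv
    have : ∃ t i' w, t ≤ k ∧ i' ≤ k ∧ w ∈ WW ∧ v ∈ Ex t (run w (zz a i')) ∧
      (Dfn (run w (zz a i')) ∨ t = 0) := by
      by_cases hD : Dfn a
      · exact ⟨k, 0, [], le_rfl, by omega, by simp [WW], hv, Or.inl hD⟩
      · exact Ex_reduce a k k 0 a v (by omega) (Or.inl rfl) hD hv
    obtain ⟨t, i, w, ht, hi, hw, h⟩ := this
    simp only [Set.mem_iUnion]
    exact ⟨t, by simp; omega, i, by simp; omega, w, hw, h⟩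
  · have : WW.card ≤ 4 := Finset.card_le_four
    simp only [Finset.card_range]
    calc (k + 1) * ((k + 1) * (WW.card * M)) ≤ (k + 1) * ((k + 1) * (4 * M)) := by gcongr
      _ = _ := by rw [hM]; ring
      _ ≤ _ := le_rfl

/-! Bridge to the statement -/

lemma mem_XSeq (a : Fin 2 → ℝ) (k : ℕ) : ∀ x : Fin 2 → ℝ, x ∈ XSeq {M1, M2} a k ↔
    ∃ w : List Bool, w.length = k ∧ run w (a 0, a 1) = (x 0, x 1) := by
  induction k with
  | zero =>
    intro x
    simp only [XSeq, Set.mem_singleton_iff, List.length_eq_zero_iff]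
    constructor
    · rintro rfl; exact ⟨[], rfl, rfl⟩
    · rintro ⟨w, rfl, h⟩
      simp only [run, Prod.mk.injEq] at h
      funext i; fin_cases i
      · exact h.1.symm
      · exact h.2.symm
  | succ k ih =>
    intro x
    simp only [XSeq, Set.mem_iUnion, Set.mem_image, Set.mem_insert_iff, Set.mem_singleton_iff]
    constructor
    · rintro ⟨A, hA, y, hy, rfl⟩
      obtain ⟨w, hw, h⟩ := (ih y).1 hy
      rcases hA with rfl | rfl
      · refine ⟨false :: w, by simp [hw], ?_⟩
        simp [run, h, ss, M1, Matrix.mulVec, dotProduct, Fin.sum_univ_two]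
      · refine ⟨true :: w, by simp [hw], ?_⟩
        simp [run, h, uu, M2, Matrix.mulVec, dotProduct, Fin.sum_univ_two]
    · rintro ⟨w, hw, h⟩
      match w, hw, h with
      | false :: w, hw, h =>
        refine ⟨M1, Or.inl rfl, ![(run w (a 0, a 1)).1, (run w (a 0, a 1)).2], ?_, ?_⟩
        · exact (ih _).2 ⟨w, by simpa using hw, by simp⟩
        · simp only [run, ss, Prod.mk.injEq] at h
          funext i; fin_cases i <;>
            simp [M1, Matrix.mulVec, dotProduct, Fin.sum_univ_two, h.1, h.2]
      | true :: w, hw, h =>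
        refine ⟨M2, Or.inr rfl, ![(run w (a 0, a 1)).1, (run w (a 0, a 1)).2], ?_, ?_⟩
        · exact (ih _).2 ⟨w, by simpa using hw, by simp⟩
        · simp only [run, uu, Prod.mk.injEq] at h
          funext i; fin_cases i
          · simpa [M2, Matrix.mulVec, dotProduct, Fin.sum_univ_two] using h.1
          · simpa [M2, Matrix.mulVec, dotProduct, Fin.sum_univ_two] using h.2

lemma XSeq_finite (a : Fin 2 → ℝ) (k : ℕ) : (XSeq {M1, M2} a k).Finite := by
  refine ((List.finite_length_eq Bool k).image
    (fun w => ![(run w (a 0, a 1)).1, (run w (a 0, a 1)).2])).subset ?_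
  intro x hx
  obtain ⟨w, hw, h⟩ := (mem_XSeq a k x).1 hx
  refine ⟨w, hw, ?_⟩
  funext i; fin_cases i <;> simp [h]

lemma EPts_Ex (a : Fin 2 → ℝ) (k : ℕ) {v : Fin 2 → ℝ} (hv : v ∈ EPts {M1, M2} a k) :
    (v 0, v 1) ∈ Ex k (a 0, a 1) := by
  set X := XSeq {M1, M2} a k with hX
  have hvX : v ∈ X := extremePoints_convexHull_subset hv
  have hnot : v ∉ convexHull ℝ (X \ {v}) := by
    have h2 := ((convex_convexHull ℝ X).mem_extremePoints_iff_mem_sdiff_convexHull_sdiff).1 hv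
    intro h3
    exact h2.2 (convexHull_mono (Set.sdiff_subset_sdiff_left (subset_convexHull ℝ X)) h3)
  have hfin : (X \ {v}).Finite := (XSeq_finite a k).subset Set.sdiff_subset
  obtain ⟨f, u, hf1, hf2⟩ := geometric_hahn_banach_closed_point (convex_convexHull ℝ (X \ {v}))
    (hfin.isClosed_convexHull ℝ) hnot
  have hrep : ∀ x : Fin 2 → ℝ, f x = f (Pi.single 0 1) * x 0 + f (Pi.single 1 1) * x 1 := by
    intro x
    have : x = x 0 • Pi.single 0 (1 : ℝ) + x 1 • Pi.single 1 (1 : ℝ) := by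
      funext i; fin_cases i <;> simp
    conv_lhs => rw [this]
    simp; ring
  refine ⟨f (Pi.single 0 1), f (Pi.single 1 1), (mem_XSeq a k v).1 hvX, fun w hw hne => ?_⟩
  set x : Fin 2 → ℝ := ![(run w (a 0, a 1)).1, (run w (a 0, a 1)).2] with hx
  have hxX : x ∈ X := (mem_XSeq a k x).2 ⟨w, hw, by simp [hx]⟩
  have hxv : x ≠ v := by
    rintro h
    apply hne
    rw [← h]; simp [hx]
  have h1 := hf1 x (subset_convexHull ℝ _ ⟨hxX, hxv⟩)
  have h2 := h1.trans hf2
  rw [hrep x, hrep v] at h2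
  simpa [hx] using h2

/-- `N_k(Σ₁, a) = O(k⁴)` uniformly in `a`, where `Σ₁ = {A₁, A₂}`. -/
theorem stmt6 : ∃ α : ℝ, 0 < α ∧ ∃ k₀ : ℕ, ∀ k : ℕ, k₀ ≤ k →
    ∀ a : Fin 2 → ℝ, (NExt {M1, M2} a k : ℝ) ≤ α * (k : ℝ) ^ 4 := by
  obtain ⟨G, hG⟩ := Lset_bd
  refine ⟨((4 * (7 + 3 * G) * 2 ^ 4 : ℕ) : ℝ), by positivity, 1, fun k hk a => ?_⟩
  have h1 : NExt {M1, M2} a k ≤ 4 * (7 + 3 * G) * (k + 1) ^ 4 := by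
    have hb : Bd (EPts {M1, M2} a k) (4 * (7 + 3 * G) * (k + 1) ^ 4) := by
      refine ((Ex_bd hG k (a 0, a 1)).image (fun u => ![u.1, u.2])).mono ?_ le_rfl
      intro v hv
      refine ⟨_, EPts_Ex a k hv, ?_⟩
      funext i; fin_cases i <;> rfl
    obtain ⟨F, hF1, hF2⟩ := hb
    calc NExt {M1, M2} a k ≤ (F : Set (Fin 2 → ℝ)).ncard :=
          Set.ncard_le_ncard hF1 F.finite_toSet
      _ = F.card := Set.ncard_coe_finset F
      _ ≤ _ := hF2
  have h2 : 4 * (7 + 3 * G) * (k + 1) ^ 4 ≤ 4 * (7 + 3 * G) * 2 ^ 4 * k ^ 4 := by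
    have : (k + 1) ^ 4 ≤ (2 * k) ^ 4 := Nat.pow_le_pow_left (by omega) 4
    calc 4 * (7 + 3 * G) * (k + 1) ^ 4 ≤ 4 * (7 + 3 * G) * (2 * k) ^ 4 := by gcongr
      _ = _ := by ring
  exact_mod_cast h1.trans h2

end
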